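/- arXiv:2004.01865 — 2 statements merged into one kernel-verified Lean document; each statement's English description precedes it below -/
import Mathlib

section
/- Let K satisfy the kernel assumption and L(t) = ∫_t^∞ K(u)du·1_{t>0} − ∫_{−∞}^t K(u)du·1_{t≤0}. With b_n = m_n Δ_n → 0, m_n √Δ_n → ∞, t_j = jΔ_n, and t ∈ ((i−1)Δ_n, iΔ_n], the quantity (Δ_n²/m_n)[ Σ_{j=i+1}^n (Σ_{l=j}^n K_{b_n}(t_{l−1}−t))² + Σ_{j=2}^i (Σ_{l=1}^{j−1} K_{b_n}(t_{l−1}−t))² ] converges to ∫_ℝ L(u)² du as n → ∞, provided 0 < t < T and t/b_n → ∞, (T−t)/b_n → ∞. -/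
open MeasureTheory Set Filter

/-- Dual Hardy inequality for a finite sequence that vanishes at `N`. -/
theorem sum_sq_le_four_mul_sum_sq_sub (S : ℕ → ℝ) (N : ℕ) (hN : S N = 0) :
    ∑ p ∈ Finset.range N, S p ^ 2
      ≤ 4 * ∑ p ∈ Finset.range N, (((p : ℝ) + 1) * (S p - S (p + 1))) ^ 2 := by
  have abel : ∀ k : ℕ, ∑ p ∈ Finset.range k, S p ^ 2
      = ∑ p ∈ Finset.range k, ((p : ℝ) + 1) * (S p ^ 2 - S (p + 1) ^ 2) + k * S k ^ 2 := by
    intro k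
    induction k with
    | zero => simp
    | succ k ih => rw [Finset.sum_range_succ, Finset.sum_range_succ, ih]; push_cast; ring
  have key : ∑ p ∈ Finset.range N, ((p : ℝ) + 1) * (S p ^ 2 - S (p + 1) ^ 2)
      ≤ ∑ p ∈ Finset.range N,
        (S p ^ 2 / 2 + 2 * (((p : ℝ) + 1) * (S p - S (p + 1))) ^ 2) := by
    refine Finset.sum_le_sum fun p _ => ?_
    have hp : (0 : ℝ) ≤ (p : ℝ) + 1 := by positivity
    nlinarith [sq_nonneg (S p - 2 * (((p : ℝ) + 1) * (S p - S (p + 1)))),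
      mul_nonneg hp (sq_nonneg (S p - S (p + 1)))]
  have h := abel N
  rw [Finset.sum_add_distrib, ← Finset.mul_sum, ← Finset.sum_div] at key
  rw [hN] at h
  linarith

/-- The oscillation of a Lipschitz function is controlled by the integral of its absolute value. -/
theorem LipschitzWith.sq_sub_le_integral_abs {K : ℝ → ℝ} {C : NNReal} (hK : LipschitzWith C K)
    {a b x : ℝ} (hax : a ≤ x) (hxb : x ≤ b) :
    (K a - K x) ^ 2 ≤ 16 * C * ∫ v in a..b, |K v| := by
  have hlip : ∀ y z, |K y - K z| ≤ C * |y - z| := fun y z => by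
    simpa [Real.dist_eq] using hK.dist_le_mul y z
  have hii : ∀ y z, IntervalIntegrable (fun v => |K v|) volume y z := fun y z =>
    hK.continuous.abs.intervalIntegrable y z
  obtain ⟨d, hd⟩ : ∃ d, d = |K a - K x| := ⟨_, rfl⟩
  have hd0 : 0 ≤ d := hd ▸ abs_nonneg _
  have hint0 : 0 ≤ ∫ v in a..b, |K v| :=
    intervalIntegral.integral_nonneg (hax.trans hxb) fun _ _ => abs_nonneg _
  rw [← sq_abs, ← hd]
  rcases hd0.eq_or_lt with h0 | hdpos
  · rw [← h0]; simp; positivity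
  have hdC : d ≤ C * (x - a) := by
    have := hlip a x
    rwa [← hd, abs_sub_comm, abs_of_nonneg (sub_nonneg.2 hax)] at this
  have hC : 0 < (C : ℝ) := by
    rcases (C.coe_nonneg).eq_or_lt with h | h
    · rw [← h] at hdC; linarith
    · exact h
  obtain ⟨r, hr⟩ : ∃ r, r = d / (4 * C) := ⟨_, rfl⟩
  have hr0 : 0 < r := by rw [hr]; positivity
  have hCr : C * r = d / 4 := by rw [hr]; field_simp
  have hrx : r ≤ x - a := by nlinarith
  have sub : ∀ y z, a ≤ y → y ≤ z → z ≤ b → z - y = r → (∀ v ∈ Icc y z, d / 4 ≤ |K v|) →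
      d ^ 2 ≤ 16 * C * ∫ v in a..b, |K v| := by
    intro y z h1 h2 h3 h4 h5
    have e1 : ∫ _ in y..z, d / 4 ≤ ∫ v in y..z, |K v| :=
      intervalIntegral.integral_mono_on h2 (by simp) (hii _ _) h5
    have e2 : ∫ v in y..z, |K v| ≤ ∫ v in a..b, |K v| :=
      intervalIntegral.integral_mono_interval h1 h2 h3
        (Eventually.of_forall fun _ => abs_nonneg _) (hii _ _)
    rw [intervalIntegral.integral_const, h4, smul_eq_mul] at e1
    have : d ^ 2 = 16 * C * (r * (d / 4)) := by rw [hr]; field_simp; norm_num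
    rw [this]
    gcongr
    exact e1.trans e2
  have hor : d / 2 ≤ |K a| ∨ d / 2 ≤ |K x| := by
    by_contra! h
    have := abs_sub (K a) (K x)
    linarith
  have near : ∀ y, d / 2 ≤ |K y| → ∀ v, |y - v| ≤ r → d / 4 ≤ |K v| := by
    intro y hy v hv
    have h1 := hlip y v
    have h2 : C * |y - v| ≤ C * r := by gcongr
    have h3 := abs_sub_abs_le_abs_sub (K y) (K v)
    linarith
  rcases hor with h | h
  · refine sub a (a + r) le_rfl (by linarith) (by linarith) (by ring) fun v hv => near a h v ?_
    rw [abs_le]; constructor <;> linarith [hv.1, hv.2]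
  · refine sub (x - r) x (by linarith) (by linarith) hxb (by ring) fun v hv => near x h v ?_
    rw [abs_le]; constructor <;> linarith [hv.1, hv.2]

theorem integral_Ioi_sub_integral_Ioi {K : ℝ → ℝ} (hK : Integrable K) {a b : ℝ} :
    (∫ v in Ioi a, K v) - ∫ v in Ioi b, K v = ∫ v in a..b, K v :=
  intervalIntegral.integral_Ioi_sub_Ioi' hK.integrableOn hK.integrableOn

theorem abs_integral_Ioi_le {K : ℝ → ℝ} (hK : Integrable K) (u : ℝ) :
    |∫ v in Ioi u, K v| ≤ ∫ v, |K v| :=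
  (abs_integral_le_integral_abs).trans
    (setIntegral_le_integral hK.abs (Eventually.of_forall fun _ => abs_nonneg _))

theorem mul_abs_integral_Ioi_le {K : ℝ → ℝ} (hK : Integrable K)
    (hKx : Integrable fun x => K x * x) {u : ℝ} (hu : 0 ≤ u) :
    u * |∫ v in Ioi u, K v| ≤ ∫ v, |K v * v| := by
  calc u * |∫ v in Ioi u, K v| ≤ u * ∫ v in Ioi u, |K v| := by
        gcongr; exact abs_integral_le_integral_abs
    _ = ∫ v in Ioi u, u * |K v| := (integral_const_mul _ _).symm
    _ ≤ ∫ v in Ioi u, |K v * v| := by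
        refine setIntegral_mono_on (hK.abs.integrableOn.const_mul u) hKx.abs.integrableOn
          measurableSet_Ioi fun v hv => ?_
        have hv : u < v := hv
        rw [abs_mul, abs_of_nonneg (hu.trans hv.le), mul_comm]
        gcongr
    _ ≤ _ := setIntegral_le_integral hKx.abs (Eventually.of_forall fun _ => abs_nonneg _)

theorem continuous_integral_Ioi {K : ℝ → ℝ} (hK : Integrable K) :
    Continuous fun u => ∫ v in Ioi u, K v := by
  have h : (fun u => ∫ v in Ioi u, K v)
      = fun u => (∫ v in Ioi 0, K v) - ∫ v in (0 : ℝ)..u, K v := by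
    funext u; rw [← integral_Ioi_sub_integral_Ioi hK]; ring
  rw [h]
  exact continuous_const.sub
    (intervalIntegral.continuous_primitive (fun _ _ => hK.intervalIntegrable) 0)

theorem integrableOn_sq_integral_Ioi {K : ℝ → ℝ} (hK : Integrable K)
    (hKx : Integrable fun x => K x * x) :
    IntegrableOn (fun u => (∫ v in Ioi u, K v) ^ 2) (Ioi 0) := by
  have hbase := (integrable_inv_one_add_sq.const_mul
    (((∫ v, |K v|) + ∫ v, |K v * v|) ^ 2)).integrableOn (s := Ioi (0 : ℝ))
  refine Integrable.mono' hbase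
    ((continuous_integral_Ioi hK).pow 2).aestronglyMeasurable ?_
  refine (ae_restrict_iff' measurableSet_Ioi).2 (Eventually.of_forall fun u hu => ?_)
  have hu : 0 < u := hu
  rw [Real.norm_of_nonneg (sq_nonneg _), ← div_eq_mul_inv, le_div_iff₀ (by positivity)]
  have h1 := abs_integral_Ioi_le hK u
  have h2 := mul_abs_integral_Ioi_le hK hKx hu.le
  rw [← sq_abs (∫ v in Ioi u, K v)]
  set g := |∫ v in Ioi u, K v|
  have hg : 0 ≤ g := abs_nonneg _
  calc g ^ 2 * (1 + u ^ 2) ≤ (g + u * g) ^ 2 := by nlinarith [mul_nonneg hu.le (sq_nonneg g)]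
    _ ≤ _ := by gcongr

/-- Accumulated squared error of the Riemann sums approximating the tail integrals of `K`. -/
theorem sum_sq_riemann_error_le {K : ℝ → ℝ} {C : NNReal} (hlip : LipschitzWith C K)
    (hK : Integrable K) (hKx : Integrable fun x => K x * x) {h c : ℝ} (hh : 0 < h) (hc : 0 ≤ c)
    (N : ℕ) :
    h * ∑ p ∈ Finset.range N, (h * (∑ q ∈ Finset.Ico p N, K (c + q * h))
        - ((∫ v in Ioi (c + p * h), K v) - ∫ v in Ioi (c + N * h), K v)) ^ 2
      ≤ 64 * C * (N * h ^ 2) * ((∫ v, |K v * v|) + h * ∫ v, |K v|) := by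
  have hmono : ∀ q : ℕ, c + q * h ≤ c + (q + 1 : ℕ) * h := fun q => by
    push_cast; linarith
  have hcell : ∀ q < N, (((q : ℝ) + 1) * (h * K (c + q * h)
      - ∫ v in (c + q * h)..(c + (q + 1 : ℕ) * h), K v)) ^ 2
      ≤ 16 * C * (N * h) * ∫ v in (c + q * h)..(c + (q + 1 : ℕ) * h),
        (|K v * v| + h * |K v|) := by
    intro q hq
    set a := c + q * h with ha
    set b := c + (q + 1 : ℕ) * h with hb
    have hab : a ≤ b := hmono q
    have hba : b - a = h := by rw [ha, hb]; push_cast; ring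
    set I := ∫ v in a..b, |K v| with hI
    have hI0 : 0 ≤ I := intervalIntegral.integral_nonneg hab fun _ _ => abs_nonneg _
    have hd : h * K a - ∫ v in a..b, K v = ∫ v in a..b, (K a - K v) := by
      rw [intervalIntegral.integral_sub (by simp) hK.intervalIntegrable,
        intervalIntegral.integral_const, hba, smul_eq_mul]
    have hd2 : (h * K a - ∫ v in a..b, K v) ^ 2 ≤ h ^ 2 * (16 * C * I) := by
      have h1 : ‖∫ v in a..b, (K a - K v)‖ ≤ √(16 * C * I) * |b - a| := by
        refine intervalIntegral.norm_integral_le_of_norm_le_const fun v hv => ?_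
        rw [uIoc_of_le hab] at hv
        exact Real.abs_le_sqrt (hlip.sq_sub_le_integral_abs hv.1.le hv.2)
      rw [hd, ← sq_abs]
      calc |∫ v in a..b, (K a - K v)| ^ 2 ≤ (√(16 * C * I) * |b - a|) ^ 2 := by
            gcongr; exact h1
        _ = _ := by rw [hba, mul_pow, Real.sq_sqrt (by positivity), sq_abs]; ring
    have hqN : ((q : ℝ) + 1) * h ≤ N * h := by
      gcongr; exact_mod_cast hq
    have hw : ((q : ℝ) + 1) * h * I ≤ ∫ v in a..b, (|K v * v| + h * |K v|) := by
      rw [hI, ← intervalIntegral.integral_const_mul]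
      refine intervalIntegral.integral_mono_on hab
        (hK.abs.const_mul _).intervalIntegrable
        (hKx.abs.add (hK.abs.const_mul h)).intervalIntegrable fun v hv => ?_
      have hv0 : (q : ℝ) * h ≤ v := by linarith [hv.1]
      have hv1 : 0 ≤ v := le_trans (by positivity) hv0
      rw [abs_mul, abs_of_nonneg hv1]
      nlinarith [mul_le_mul_of_nonneg_left hv0 (abs_nonneg (K v))]
    calc (((q : ℝ) + 1) * (h * K a - ∫ v in a..b, K v)) ^ 2
        ≤ ((q : ℝ) + 1) ^ 2 * (h ^ 2 * (16 * C * I)) := by rw [mul_pow]; gcongr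
      _ = 16 * C * ((((q : ℝ) + 1) * h) * (((q : ℝ) + 1) * h * I)) := by ring
      _ ≤ 16 * C * ((N * h) * ∫ v in a..b, (|K v * v| + h * |K v|)) := by gcongr
      _ = _ := by ring
  have hardy := sum_sq_le_four_mul_sum_sq_sub
    (fun p => h * (∑ q ∈ Finset.Ico p N, K (c + q * h))
        - ((∫ v in Ioi (c + p * h), K v) - ∫ v in Ioi (c + N * h), K v)) N (by simp)
  have hsum : ∑ p ∈ Finset.range N, (((p : ℝ) + 1) *
      ((h * (∑ q ∈ Finset.Ico p N, K (c + q * h))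
        - ((∫ v in Ioi (c + p * h), K v) - ∫ v in Ioi (c + N * h), K v))
      - (h * (∑ q ∈ Finset.Ico (p + 1) N, K (c + q * h))
        - ((∫ v in Ioi (c + (p + 1 : ℕ) * h), K v) - ∫ v in Ioi (c + N * h), K v)))) ^ 2
      ≤ 16 * C * (N * h) * ((∫ v, |K v * v|) + h * ∫ v, |K v|) := by
    have hint : Integrable fun v => |K v * v| + h * |K v| := hKx.abs.add (hK.abs.const_mul h)
    calc _ ≤ ∑ p ∈ Finset.range N, 16 * C * (N * h) *
          ∫ v in (c + p * h)..(c + (p + 1 : ℕ) * h), (|K v * v| + h * |K v|) := by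
          refine Finset.sum_le_sum fun p hp => ?_
          have hp' := Finset.mem_range.1 hp
          refine le_trans (le_of_eq ?_) (hcell p hp')
          rw [Finset.sum_eq_sum_Ico_succ_bot hp', ← integral_Ioi_sub_integral_Ioi hK]
          ring
      _ = 16 * C * (N * h) * ∫ v in (c + (0 : ℕ) * h)..(c + N * h), (|K v * v| + h * |K v|) := by
          rw [← Finset.mul_sum, intervalIntegral.sum_integral_adjacent_intervals
            (a := fun q : ℕ => c + q * h) fun _ _ => hint.intervalIntegrable]
      _ ≤ 16 * C * (N * h) * ∫ v, (|K v * v| + h * |K v|) := by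
          gcongr
          rw [intervalIntegral.integral_of_le (by push_cast; nlinarith [N.cast_nonneg (α := ℝ)])]
          exact setIntegral_le_integral hint (Eventually.of_forall fun v => by positivity)
      _ = _ := by rw [integral_add hKx.abs (hK.abs.const_mul h), integral_const_mul]
  calc _ ≤ h * (4 * (16 * C * (N * h) * ((∫ v, |K v * v|) + h * ∫ v, |K v|))) := by
        gcongr; exact hardy.trans (by gcongr)
    _ = _ := by ring

/-- Error of the Riemann sum for the square of the tail integral. -/
theorem abs_sum_sq_tail_sub_integral_le {K : ℝ → ℝ} (hK : Integrable K) {h c : ℝ} (hh : 0 < h)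
    (N : ℕ) :
    |h * ∑ p ∈ Finset.range N, (∫ v in Ioi (c + p * h), K v) ^ 2
      - ∫ u in c..(c + N * h), (∫ v in Ioi u, K v) ^ 2| ≤ 2 * h * (∫ v, |K v|) ^ 2 := by
  set M := ∫ v, |K v| with hM
  have hcont : Continuous fun u => (∫ v in Ioi u, K v) ^ 2 := (continuous_integral_Ioi hK).pow 2
  have hM0 : 0 ≤ M := integral_nonneg fun _ => abs_nonneg _
  have hsplit := intervalIntegral.sum_integral_adjacent_intervals (μ := volume) (n := N)
    (f := fun u => (∫ v in Ioi u, K v) ^ 2)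
    (a := fun q : ℕ => c + q * h) fun _ _ => hcont.intervalIntegrable _ _
  have hsplitK := intervalIntegral.sum_integral_adjacent_intervals (μ := volume) (n := N)
    (f := fun u => |K u|)
    (a := fun q : ℕ => c + q * h) fun _ _ => hK.abs.intervalIntegrable
  simp only [Nat.cast_zero, zero_mul, add_zero] at hsplit hsplitK
  rw [← hsplit, Finset.mul_sum, ← Finset.sum_sub_distrib]
  calc _ ≤ ∑ p ∈ Finset.range N, |h * (∫ v in Ioi (c + p * h), K v) ^ 2
        - ∫ u in (c + p * h)..(c + (p + 1 : ℕ) * h), (∫ v in Ioi u, K v) ^ 2| :=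
        Finset.abs_sum_le_sum_abs _ _
    _ ≤ ∑ p ∈ Finset.range N,
        2 * h * M * ∫ v in (c + p * h)..(c + (p + 1 : ℕ) * h), |K v| := by
        refine Finset.sum_le_sum fun p _ => ?_
        set a := c + p * h with ha
        set b := c + (p + 1 : ℕ) * h with hb
        have hba : b - a = h := by rw [ha, hb]; push_cast; ring
        have hab : a ≤ b := by linarith
        have e : h * (∫ v in Ioi a, K v) ^ 2 - ∫ u in a..b, (∫ v in Ioi u, K v) ^ 2
            = ∫ u in a..b, ((∫ v in Ioi a, K v) ^ 2 - (∫ v in Ioi u, K v) ^ 2) := by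
          rw [intervalIntegral.integral_sub (by simp) (hcont.intervalIntegrable _ _),
            intervalIntegral.integral_const, hba, smul_eq_mul]
        rw [e]
        have h1 : ‖∫ u in a..b, ((∫ v in Ioi a, K v) ^ 2 - (∫ v in Ioi u, K v) ^ 2)‖
            ≤ (2 * M * ∫ v in a..b, |K v|) * |b - a| := by
          refine intervalIntegral.norm_integral_le_of_norm_le_const fun u hu => ?_
          rw [uIoc_of_le hab] at hu
          rw [Real.norm_eq_abs, sq_sub_sq, abs_mul]
          have i1 := abs_integral_Ioi_le hK a
          have i2 := abs_integral_Ioi_le hK u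
          have i3 : |(∫ v in Ioi a, K v) - ∫ v in Ioi u, K v| ≤ ∫ v in a..b, |K v| := by
            rw [integral_Ioi_sub_integral_Ioi hK]
            exact (intervalIntegral.abs_integral_le_integral_abs hu.1.le).trans
              (intervalIntegral.integral_mono_interval le_rfl hu.1.le hu.2
                (Eventually.of_forall fun _ => abs_nonneg _) hK.abs.intervalIntegrable)
          have i4 := abs_add_le (∫ v in Ioi a, K v) (∫ v in Ioi u, K v)
          gcongr
          linarith
        rw [hba, abs_of_pos hh] at h1
        exact h1.trans (le_of_eq (by ring))
    _ = 2 * h * M * ∫ v in c..(c + N * h), |K v| := by rw [← Finset.mul_sum, hsplitK]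
    _ ≤ 2 * h * M * M := by
        gcongr
        rw [intervalIntegral.integral_of_le (by nlinarith [N.cast_nonneg (α := ℝ)])]
        exact setIntegral_le_integral hK.abs (Eventually.of_forall fun _ => abs_nonneg _)
    _ = _ := by ring

/-- Nested Riemann sums of an integrable Lipschitz function with finite first moment converge
to the integral of its squared tail. -/
theorem tendsto_sum_sq_riemann_sum {K : ℝ → ℝ} {C : NNReal} (hlip : LipschitzWith C K)
    (hK : Integrable K) (hKx : Integrable fun x => K x * x) {h c : ℕ → ℝ} {N : ℕ → ℕ}
    (hpos : ∀ n, 0 < h n) (h0 : Tendsto h atTop (nhds 0))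
    (hc : ∀ᶠ n in atTop, 0 ≤ c n ∧ c n ≤ 2 * h n)
    (hN : Tendsto (fun n => (N n : ℝ) * h n) atTop atTop)
    (hN2 : Tendsto (fun n => (N n : ℝ) * h n ^ 2) atTop (nhds 0)) :
    Tendsto (fun n => h n * ∑ p ∈ Finset.range (N n),
        (h n * ∑ q ∈ Finset.Ico p (N n), K (c n + q * h n)) ^ 2) atTop
      (nhds (∫ u in Ioi 0, (∫ v in Ioi u, K v) ^ 2)) := by
  obtain ⟨G, hG⟩ : ∃ G : ℝ → ℝ, G = fun u => ∫ v in Ioi u, K v := ⟨_, rfl⟩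
  obtain ⟨S, hS⟩ : ∃ S : ℕ → ℕ → ℝ,
    S = fun n p => h n * ∑ q ∈ Finset.Ico p (N n), K (c n + q * h n) := ⟨_, rfl⟩
  obtain ⟨J, hJ⟩ : ∃ J, J = ∫ u in Ioi 0, G u ^ 2 := ⟨_, rfl⟩
  have hGcont : Continuous G := hG ▸ continuous_integral_Ioi hK
  have hGint : IntegrableOn (fun u => G u ^ 2) (Ioi 0) := by
    rw [hG]; exact integrableOn_sq_integral_Ioi hK hKx
  have hc0 : Tendsto c atTop (nhds 0) :=
    squeeze_zero' (hc.mono fun _ h => h.1) (hc.mono fun _ h => h.2)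
      (by simpa using h0.const_mul 2)
  have hcN : Tendsto (fun n => c n + N n * h n) atTop atTop := hc0.add_atTop hN
  have hP : Tendsto (fun n => h n * ∑ p ∈ Finset.range (N n), G (c n + p * h n) ^ 2) atTop
      (nhds J) := by
    have hint : Tendsto (fun n => ∫ u in (c n)..(c n + N n * h n), G u ^ 2) atTop (nhds J) := by
      have h1 := intervalIntegral_tendsto_integral_Ioi 0 hGint hcN
      have h2 : Tendsto (fun n => ∫ u in (0 : ℝ)..(c n), G u ^ 2) atTop (nhds 0) := by
        have := (intervalIntegral.continuous_primitive (μ := volume)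
          (fun a b => (hGcont.pow 2).intervalIntegrable a b) 0).tendsto 0
        rw [intervalIntegral.integral_same] at this
        exact this.comp hc0
      have h3 := h1.sub h2
      rw [sub_zero, ← hJ] at h3
      refine h3.congr fun n => ?_
      exact intervalIntegral.integral_interval_sub_left
        ((hGcont.pow 2).intervalIntegrable _ _) ((hGcont.pow 2).intervalIntegrable _ _)
    have hdiff : Tendsto (fun n => h n * ∑ p ∈ Finset.range (N n), G (c n + p * h n) ^ 2
        - ∫ u in (c n)..(c n + N n * h n), G u ^ 2) atTop (nhds 0) := by
      refine squeeze_zero_norm (a := fun n => 2 * h n * (∫ v, |K v|) ^ 2) (fun n => ?_) ?_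
      · rw [hG]; exact abs_sum_sq_tail_sub_integral_le hK (hpos n) (N n)
      · simpa using (h0.const_mul 2).mul_const ((∫ v, |K v|) ^ 2)
    simpa using hdiff.add hint
  have hE : Tendsto (fun n => h n * ∑ p ∈ Finset.range (N n),
      (S n p - G (c n + p * h n)) ^ 2) atTop (nhds 0) := by
    have hlim : Tendsto (fun n => 2 * (64 * C * (N n * h n ^ 2) *
        ((∫ v, |K v * v|) + h n * ∫ v, |K v|)) + 2 * ((∫ v, |K v * v|) ^ 2 / (N n * h n)))
        atTop (nhds 0) := by
      have h1 := ((hN2.const_mul (64 * (C : ℝ))).mul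
        ((h0.mul_const (∫ v, |K v|)).const_add (∫ v, |K v * v|))).const_mul 2
      have h2 := (hN.const_div_atTop ((∫ v, |K v * v|) ^ 2)).const_mul 2
      simpa using h1.add h2
    refine squeeze_zero' (Eventually.of_forall fun n => ?_) ?_ hlim
    · have := hpos n; positivity
    filter_upwards [hc, hN.eventually_gt_atTop 0] with n hcn hNn
    have hhn := hpos n
    have hA := sum_sq_riemann_error_le hlip hK hKx hhn hcn.1 (N n)
    have hB : h n * ∑ p ∈ Finset.range (N n), G (c n + N n * h n) ^ 2
        ≤ (∫ v, |K v * v|) ^ 2 / (N n * h n) := by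
      rw [le_div_iff₀ hNn, Finset.sum_const, Finset.card_range, nsmul_eq_mul]
      have h1 := mul_abs_integral_Ioi_le hK hKx (u := c n + N n * h n) (by linarith [hcn.1])
      have h2 : G (c n + N n * h n) = ∫ v in Ioi (c n + N n * h n), K v := by rw [hG]
      rw [← h2] at h1
      calc h n * (N n * G (c n + N n * h n) ^ 2) * (N n * h n)
          = (N n * h n * |G (c n + N n * h n)|) ^ 2 := by rw [mul_pow, sq_abs]; ring
        _ ≤ ((c n + N n * h n) * |G (c n + N n * h n)|) ^ 2 := by
            gcongr; linarith [hcn.1]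
        _ ≤ _ := pow_le_pow_left₀ (mul_nonneg (by linarith [hcn.1]) (abs_nonneg _)) h1 2
    have hsum : ∑ p ∈ Finset.range (N n), (S n p - G (c n + p * h n)) ^ 2
        ≤ 2 * ∑ p ∈ Finset.range (N n),
            (S n p - (G (c n + p * h n) - G (c n + N n * h n))) ^ 2
          + 2 * ∑ p ∈ Finset.range (N n), G (c n + N n * h n) ^ 2 := by
      rw [Finset.mul_sum, Finset.mul_sum, ← Finset.sum_add_distrib]
      refine Finset.sum_le_sum fun p _ => ?_
      nlinarith [sq_nonneg (S n p - G (c n + p * h n) + 2 * G (c n + N n * h n))]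
    have hA' : h n * ∑ p ∈ Finset.range (N n),
        (S n p - (G (c n + p * h n) - G (c n + N n * h n))) ^ 2
        ≤ 64 * C * (N n * h n ^ 2) * ((∫ v, |K v * v|) + h n * ∫ v, |K v|) := by
      rw [hS, hG]; exact hA
    have := mul_le_mul_of_nonneg_left hsum hhn.le
    linarith
  have hX : Tendsto (fun n => h n * ∑ p ∈ Finset.range (N n),
      (S n p - G (c n + p * h n)) * G (c n + p * h n)) atTop (nhds 0) := by
    have hEP := (hE.mul hP).sqrt
    rw [zero_mul, Real.sqrt_zero] at hEP
    refine squeeze_zero_norm (fun n => Real.abs_le_sqrt ?_) hEP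
    have := Finset.sum_mul_sq_le_sq_mul_sq (Finset.range (N n))
      (fun p => S n p - G (c n + p * h n)) (fun p => G (c n + p * h n))
    have := mul_le_mul_of_nonneg_left this (sq_nonneg (h n))
    calc _ = _ := mul_pow _ _ _
      _ ≤ _ := this
      _ = _ := by ring
  have hfin := (hE.add (hX.const_mul 2)).add hP
  simp only [mul_zero, add_zero, zero_add] at hfin
  have hGJ : ∫ u in Ioi 0, (∫ v in Ioi u, K v) ^ 2 = J := by rw [hJ, hG]
  rw [hGJ]
  refine hfin.congr fun n => ?_
  have hSn : ∀ p, h n * ∑ q ∈ Finset.Ico p (N n), K (c n + q * h n) = S n p := by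
    intro p; rw [hS]
  simp only [hSn]
  rw [mul_left_comm, ← mul_add, ← mul_add, Finset.mul_sum, ← Finset.sum_add_distrib,
    ← Finset.sum_add_distrib]
  congr 1
  exact Finset.sum_congr rfl fun p _ => by ring

theorem sum_Icc_sq_tail_reindex (f : ℕ → ℝ) {i n : ℕ} (hin : i ≤ n) :
    ∑ j ∈ Finset.Icc (i + 1) n, (∑ l ∈ Finset.Icc j n, f l) ^ 2
      = ∑ p ∈ Finset.range (n - i), (∑ q ∈ Finset.Ico p (n - i), f (q + (i + 1))) ^ 2 := by
  refine Finset.sum_nbij' (fun j => j - (i + 1)) (fun p => p + (i + 1)) ?_ ?_ ?_ ?_ ?_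
  any_goals (intro j hj; simp only [Finset.mem_Icc, Finset.mem_range] at *; omega)
  intro j hj
  congr 1
  refine Finset.sum_nbij' (fun l => l - (i + 1)) (fun q => q + (i + 1)) ?_ ?_ ?_ ?_ ?_
  any_goals (intro l hl; simp only [Finset.mem_Icc, Finset.mem_Ico] at *; omega)
  intro l hl
  simp only [Finset.mem_Icc] at hj hl
  congr 1
  omega

theorem sum_Icc_sq_head_reindex (f : ℕ → ℝ) (i : ℕ) :
    ∑ j ∈ Finset.Icc 2 i, (∑ l ∈ Finset.Icc 1 (j - 1), f l) ^ 2
      = ∑ p ∈ Finset.range (i - 1), (∑ q ∈ Finset.Ico p (i - 1), f (i - 1 - q)) ^ 2 := by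
  refine Finset.sum_nbij' (fun j => i - j) (fun p => i - p) ?_ ?_ ?_ ?_ ?_
  any_goals (intro j hj; simp only [Finset.mem_Icc, Finset.mem_range] at *; omega)
  intro j hj
  congr 1
  refine Finset.sum_nbij' (fun l => i - 1 - l) (fun q => i - 1 - q) ?_ ?_ ?_ ?_ ?_
  any_goals (intro l hl; simp only [Finset.mem_Icc, Finset.mem_Ico] at *; omega)
  intro l hl
  simp only [Finset.mem_Icc] at hj hl
  congr 1
  omega

theorem integral_sq_eq_add_of_eq_tail {K L : ℝ → ℝ} (hK : Integrable K)
    (hKx : Integrable fun x => K x * x)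
    (hL : ∀ s, L s = if 0 < s then ∫ u in Ioi s, K u else -∫ u in Iic s, K u) :
    ∫ u, L u ^ 2 = (∫ u in Ioi 0, (∫ v in Ioi u, K v) ^ 2)
      + ∫ u in Ioi 0, (∫ v in Ioi u, K (-v)) ^ 2 := by
  have hright : EqOn (fun u => (∫ v in Ioi u, K v) ^ 2) (fun u => L u ^ 2) (Ioi 0) := by
    intro u hu
    simp only [hL u, if_pos (mem_Ioi.1 hu)]
  have hleft : EqOn (fun u => (∫ v in Ioi (-u), K (-v)) ^ 2) (fun u => L u ^ 2) (Iic 0) := by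
    intro u hu
    simp only [hL u, if_neg (not_lt.2 (mem_Iic.1 hu)), integral_comp_neg_Ioi, neg_neg, neg_sq]
  have hKx' : Integrable fun x => K (-x) * x := by simpa using hKx.comp_neg.neg
  have i1 : IntegrableOn (fun u => L u ^ 2) (Ioi 0) :=
    (integrableOn_sq_integral_Ioi hK hKx).congr_fun hright measurableSet_Ioi
  have i2 : IntegrableOn (fun u => L u ^ 2) (Iic 0) := by
    refine IntegrableOn.congr_fun ?_ hleft measurableSet_Iic
    have h := Iff.mpr integrableOn_Ici_iff_integrableOn_Ioi
      (integrableOn_sq_integral_Ioi hK.comp_neg hKx')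
    rw [← neg_zero] at h
    exact h.comp_neg_Iic
  rw [← intervalIntegral.integral_Iic_add_Ioi i2 i1, add_comm,
    ← setIntegral_congr_fun measurableSet_Ioi hright,
    ← setIntegral_congr_fun measurableSet_Iic hleft,
    integral_comp_neg_Iic 0 fun u => (∫ v in Ioi u, K (-v)) ^ 2, neg_zero]

/-- With `Δ_n = T/n`, `t_j = jΔ_n`, bandwidth `b_n = m_n Δ_n → 0`,
`m_n √Δ_n → ∞`, kernel `K` (bounded, Lipschitz, `∫K = 1`, `∫|K(x)x| < ∞`),
`L(t) = (∫_t^∞ K) 1_{t>0} − (∫_{−∞}^t K) 1_{t≤0}`, a fixed `t ∈ (0,T)` with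
`t ∈ ((i_n−1)Δ_n, i_n Δ_n]` (so `i_n = ⌈tn/T⌉`), and `t/b_n → ∞`, `(T−t)/b_n → ∞`,
the quantity
`(Δ_n²/m_n)[Σ_{j=i+1}^n (Σ_{l=j}^n K_{b_n}(t_{l−1}−t))² + Σ_{j=2}^i (Σ_{l=1}^{j−1} K_{b_n}(t_{l−1}−t))²]`
converges to `∫ L(u)² du`. -/
theorem stmt_14 (T : ℝ) (hT : 0 < T) (K : ℝ → ℝ)
    (hKbdd : ∃ M : ℝ, ∀ x, |K x| ≤ M)
    (hKlip : ∃ C : NNReal, LipschitzWith C K)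
    (hKint : Integrable K) (hK1 : ∫ u, K u = 1)
    (hKx : Integrable (fun x => K x * x))
    (L : ℝ → ℝ)
    (hL : ∀ s, L s = if 0 < s then ∫ u in Ioi s, K u else -∫ u in Iic s, K u)
    (m : ℕ → ℕ) (hm1 : ∀ n, 1 ≤ m n)
    (hmΔ : Tendsto (fun n : ℕ => (m n : ℝ) * (T / (n : ℝ))) atTop (nhds 0))
    (hmsq : Tendsto (fun n : ℕ => (m n : ℝ) * Real.sqrt (T / (n : ℝ))) atTop atTop)
    (t : ℝ) (ht : t ∈ Ioo 0 T)
    (htb : Tendsto (fun n : ℕ => t / ((m n : ℝ) * (T / (n : ℝ)))) atTop atTop)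
    (hTtb : Tendsto (fun n : ℕ => (T - t) / ((m n : ℝ) * (T / (n : ℝ)))) atTop atTop) :
    Tendsto (fun n : ℕ =>
        ((T / (n : ℝ)) ^ 2 / (m n : ℝ)) *
          ((∑ j ∈ Finset.Icc (⌈t * (n : ℝ) / T⌉₊ + 1) n,
              (∑ l ∈ Finset.Icc j n,
                K (((((l : ℝ) - 1) * (T / (n : ℝ))) - t) / ((m n : ℝ) * (T / (n : ℝ))))
                  / ((m n : ℝ) * (T / (n : ℝ)))) ^ 2)
          + (∑ j ∈ Finset.Icc 2 ⌈t * (n : ℝ) / T⌉₊,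
              (∑ l ∈ Finset.Icc 1 (j - 1),
                K (((((l : ℝ) - 1) * (T / (n : ℝ))) - t) / ((m n : ℝ) * (T / (n : ℝ))))
                  / ((m n : ℝ) * (T / (n : ℝ)))) ^ 2)))
      atTop (nhds (∫ u, (L u) ^ 2)) := by
  obtain ⟨C, hlip⟩ := hKlip
  have hlip' : LipschitzWith C fun x => K (-x) := by
    have := hlip.comp (LipschitzWith.id (α := ℝ)).neg
    rwa [mul_one] at this
  have hKx' : Integrable fun x => K (-x) * x := by simpa using hKx.comp_neg.neg
  have ht0 := ht.1
  have htT := ht.2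
  obtain ⟨h, hh⟩ : ∃ h : ℕ → ℝ, h = fun n => ((m n : ℝ))⁻¹ := ⟨_, rfl⟩
  obtain ⟨i, hi⟩ : ∃ i : ℕ → ℕ, i = fun n : ℕ => ⌈t * (n : ℝ) / T⌉₊ := ⟨_, rfl⟩
  obtain ⟨c, hc⟩ : ∃ c : ℕ → ℝ,
    c = fun n => (i n : ℝ) * h n - t / ((m n : ℝ) * (T / (n : ℝ))) := ⟨_, rfl⟩
  have hmpos : ∀ n, 0 < (m n : ℝ) := fun n => by exact_mod_cast hm1 n
  have hpos : ∀ n, 0 < h n := fun n => by rw [hh]; exact inv_pos.2 (hmpos n)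
  have hΔ : Tendsto (fun n : ℕ => T / (n : ℝ)) atTop (nhds 0) :=
    tendsto_const_div_atTop_nhds_zero_nat T
  have hminf : Tendsto (fun n => (m n : ℝ)) atTop atTop := by
    refine tendsto_atTop_mono' _ ?_ hmsq
    filter_upwards [hΔ.eventually_le_const one_pos] with n hn
    exact mul_le_of_le_one_right (hmpos n).le (Real.sqrt_le_one.2 hn)
  have h0 : Tendsto h atTop (nhds 0) := by rw [hh]; exact hminf.inv_tendsto_atTop
  have hi_pos : ∀ᶠ n in atTop, 1 ≤ i n := by
    filter_upwards [eventually_gt_atTop 0] with n hn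
    have : (0 : ℝ) < n := by exact_mod_cast hn
    rw [hi]; exact Nat.ceil_pos.2 (by positivity)
  have hi_le : ∀ n, i n ≤ n := by
    intro n
    rw [hi]
    refine Nat.ceil_le.2 ?_
    rw [div_le_iff₀ hT, mul_comm]
    gcongr
  have hnh : Tendsto (fun n : ℕ => (n : ℝ) * h n ^ 2) atTop (nhds 0) := by
    have h1 := (hmsq.const_div_atTop 1).pow 2
    have h2 := h1.const_mul T
    rw [zero_pow two_ne_zero, mul_zero] at h2
    refine h2.congr' ?_
    filter_upwards [eventually_gt_atTop 0] with n hn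
    have hn' : (0 : ℝ) < n := by exact_mod_cast hn
    have := hmpos n
    rw [div_pow, mul_pow, Real.sq_sqrt (by positivity), hh]
    field_simp
  have hN2 : ∀ N : ℕ → ℕ, (∀ n, N n ≤ n) →
      Tendsto (fun n => (N n : ℝ) * h n ^ 2) atTop (nhds 0) := by
    intro N hN
    refine squeeze_zero (fun n => by positivity) (fun n => ?_) hnh
    have : (N n : ℝ) ≤ n := by exact_mod_cast hN n
    gcongr
  have htb' : ∀ᶠ n : ℕ in atTop, t / ((m n : ℝ) * (T / (n : ℝ))) = t * n / T * h n := by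
    filter_upwards [eventually_gt_atTop 0] with n hn
    have hn' : (0 : ℝ) < n := by exact_mod_cast hn
    have := hmpos n
    rw [hh]; field_simp
  have hcb : ∀ᶠ n in atTop, 0 ≤ c n ∧ c n ≤ h n := by
    filter_upwards [htb'] with n hn
    have h1 : t * n / T ≤ i n := by rw [hi]; exact Nat.le_ceil _
    have h2 : (i n : ℝ) ≤ t * n / T + 1 := by
      rw [hi]; exact (Nat.ceil_lt_add_one (by positivity)).le
    have e : c n = (i n - t * n / T) * h n := by rw [hc]; simp only; rw [hn]; ring
    rw [e]
    have := hpos n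
    constructor
    · exact mul_nonneg (by linarith) this.le
    · exact mul_le_of_le_one_left this.le (by linarith)
  have hc0 : Tendsto c atTop (nhds 0) :=
    squeeze_zero' (hcb.mono fun _ h => h.1) (hcb.mono fun _ h => h.2) h0
  have limR := tendsto_sum_sq_riemann_sum hlip hKint hKx (c := c) (N := fun n => n - i n) hpos h0
    (hcb.mono fun n hn => ⟨hn.1, by linarith [hn.2, hpos n]⟩)
    (by
      refine (hc0.neg.add_atTop hTtb).congr' ?_
      filter_upwards [eventually_gt_atTop 0] with n hn
      have hn' : (0 : ℝ) < n := by exact_mod_cast hn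
      have := hmpos n
      rw [Nat.cast_sub (hi_le n), hc, hh]
      field_simp
      ring)
    (hN2 _ fun n => Nat.sub_le _ _)
  have limL := tendsto_sum_sq_riemann_sum hlip' hKint.comp_neg hKx' (c := fun n => 2 * h n - c n)
    (N := fun n => i n - 1) hpos h0
    (hcb.mono fun n hn => ⟨by linarith [hn.2, hpos n], by linarith [hn.1]⟩)
    (by
      refine ((hc0.sub h0).add_atTop htb).congr' ?_
      filter_upwards [hi_pos] with n hn
      rw [Nat.cast_sub hn, hc]
      push_cast
      ring)
    (hN2 _ fun n => (Nat.sub_le _ _).trans (hi_le n))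
  rw [integral_sq_eq_add_of_eq_tail hKint hKx hL]
  refine (limR.add limL).congr' ?_
  filter_upwards [eventually_gt_atTop 0, hi_pos] with n hn hin
  have hn' : (0 : ℝ) < n := by exact_mod_cast hn
  have hmn := hmpos n
  have hin_eq : ⌈t * (n : ℝ) / T⌉₊ = i n := by rw [hi]
  have hcoef : ∀ s : ℝ, (T / (n : ℝ)) ^ 2 / (m n : ℝ) * (s / ((m n : ℝ) * (T / (n : ℝ)))) ^ 2
      = h n * (h n * s) ^ 2 := by
    intro s; rw [hh]; field_simp
  have hpoint : ∀ x : ℝ, ((x - 1) * (T / (n : ℝ)) - t) / ((m n : ℝ) * (T / (n : ℝ)))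
      = c n + (x - 1 - i n) * h n := by
    intro x; rw [hc, hh]; field_simp; ring
  simp only [hin_eq, hpoint]
  rw [sum_Icc_sq_tail_reindex _ (hi_le n), sum_Icc_sq_head_reindex, mul_add]
  congr 1
  · rw [Finset.mul_sum, Finset.mul_sum]
    refine Finset.sum_congr rfl fun p _ => ?_
    rw [← Finset.sum_div, hcoef]
    congr 3
    refine Finset.sum_congr rfl fun q _ => congrArg K ?_
    push_cast
    ring
  · rw [Finset.mul_sum, Finset.mul_sum]
    refine Finset.sum_congr rfl fun p _ => ?_
    rw [← Finset.sum_div, hcoef]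
    congr 3
    refine Finset.sum_congr rfl fun q hq => congrArg K ?_
    rw [Nat.cast_sub (Finset.mem_Ico.1 hq).2.le, Nat.cast_sub hin]
    push_cast
    ring
end

section
/- Let b_n > 0 with b_n → 0 and Δ_n/b_n → 0, K Lipschitz and bounded, and σ² a bounded process satisfying E[sup_{r∈[0,s]} |σ²_{t+r} − σ²_t|²] ≤ C s. Then the Riemann approximation error |Δ_n Σ_{i=1}^{n−k_n+1} K_{b_n}(t_{i−1}−τ) σ²_{t_{i−1}} − ∫_0^T K_{b_n}(t−τ) σ²_t dt| is O_P(1/(m_n √Δ_n)), where b_n = m_n Δ_n and k_n ≍ Δ_n^{−1/2}. -/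
open MeasureTheory Set Filter

/-- An analytic set is measurable up to a null set for every finite Borel measure. -/
theorem MeasureTheory.AnalyticSet.nullMeasurableSet {X : Type*} [TopologicalSpace X]
    [TopologicalSpace.MetrizableSpace X] [MeasurableSpace X] [BorelSpace X]
    {A : Set X} (hA : AnalyticSet A) (μ : Measure X) [IsFiniteMeasure μ] :
    NullMeasurableSet A μ := by
  have hinner : ∀ c < μ A, ∃ F ⊆ A, IsCompact F ∧ c ≤ μ F := by
    intro c hc
    rw [AnalyticSet] at hA
    rcases hA with rfl | ⟨f, hf, rfl⟩
    · simp at hc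
    let B : (ℕ → ℕ) → ℕ → Set (ℕ → ℕ) := fun N k => {x | ∀ i < k, x i ≤ N i}
    have step : ∀ S : Set (ℕ → ℕ), c < μ (f '' S) → ∀ k : ℕ, ∃ M : ℕ,
        c < μ (f '' (S ∩ {x | x k ≤ M})) := by
      intro S hS k
      have hmono : Monotone fun M : ℕ => f '' (S ∩ {x | x k ≤ M}) := by
        intro M M' hM
        exact image_mono (inter_subset_inter_right _ fun x (hx : x k ≤ M) => hx.trans hM)
      have hU : ⋃ M : ℕ, f '' (S ∩ {x | x k ≤ M}) = f '' S := by
        rw [← image_iUnion, ← inter_iUnion]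
        congr 1
        exact inter_eq_left.2 fun x _ => mem_iUnion.2 ⟨x k, le_refl (x k)⟩
      rw [← hU, hmono.measure_iUnion] at hS
      exact lt_iSup_iff.1 hS
    choose! M hM using step
    let S : ℕ → Set (ℕ → ℕ) := fun k => Nat.rec univ (fun k S => S ∩ {x | x k ≤ M S k}) k
    have hS : ∀ k, c < μ (f '' S k) := by
      intro k
      induction k with
      | zero => simpa [S] using hc
      | succ k ih => exact hM _ ih k
    let N : ℕ → ℕ := fun k => M (S k) k
    have hSB : ∀ k, S k = B N k := by
      intro k
      induction k with
      | zero => simp [S, B]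
      | succ k ih =>
        change S k ∩ {x | x k ≤ N k} = _
        rw [ih]
        ext x
        simp only [B, mem_inter_iff, mem_ofPred_eq, Nat.lt_succ_iff_lt_or_eq]
        constructor
        · rintro ⟨h1, h2⟩ i (hi | rfl)
          exacts [h1 i hi, h2]
        · exact fun h => ⟨fun i hi => h i (Or.inl hi), h k (Or.inr rfl)⟩
    let L : Set (ℕ → ℕ) := Set.pi univ fun i => Iic (N i)
    have hL : IsCompact L := isCompact_univ_pi fun i => (finite_Iic (N i)).isCompact
    refine ⟨f '' L, image_subset_range _ _, hL.image hf, ?_⟩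
    rw [(f '' L).measure_eq_iInf_isOpen μ]
    refine le_iInf fun U => le_iInf fun hLU => le_iInf fun hU => ?_
    suffices ∃ k, B N k ⊆ f ⁻¹' U by
      obtain ⟨k, hk⟩ := this
      rw [← hSB] at hk
      exact (hS k).le.trans (measure_mono (image_subset_iff.2 hk))
    by_contra! hcon
    choose x hxB hxU using fun k => not_subset.1 (hcon k)
    have hy : ∀ k, (fun i => min (x k i) (N i)) ∈ L := fun k i _ =>
      mem_Iic.2 (min_le_right _ _)
    obtain ⟨y, hyL, φ, hφ, hlim⟩ := hL.tendsto_subseq hy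
    have hxlim : Tendsto (x ∘ φ) atTop (nhds y) := by
      rw [tendsto_pi_nhds] at hlim ⊢
      intro i
      refine (hlim i).congr' ?_
      filter_upwards [eventually_gt_atTop i] with k hk
      exact min_eq_left (hxB (φ k) i (hk.trans_le hφ.le_apply))
    have hyU : f ⁻¹' U ∈ nhds y := (hU.preimage hf).mem_nhds (hLU ⟨y, hyL, rfl⟩)
    obtain ⟨k, hk⟩ := (hxlim.eventually hyU).exists
    exact hxU _ hk
  rcases eq_or_ne (μ A) 0 with h0 | h0
  · exact NullMeasurableSet.of_null h0
  obtain ⟨u, -, hu, hulim⟩ := exists_seq_strictMono_tendsto' (pos_iff_ne_zero.2 h0)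
  choose F hFA hFc hFu using fun k => hinner (u k) (hu k).2
  have hFm : MeasurableSet (⋃ k, F k) :=
    MeasurableSet.iUnion fun k => (hFc k).isClosed.measurableSet
  have hge : μ A ≤ μ (⋃ k, F k) :=
    le_of_tendsto' hulim fun k => (hFu k).trans (measure_mono (subset_iUnion F k))
  exact hFm.nullMeasurableSet.congr (ae_eq_of_subset_of_measure_ge (iUnion_subset hFA) hge
    hFm.nullMeasurableSet (measure_ne_top μ A))

/-- A measurable subset of a product is pulled back from a measurable subset of a product whose
second factor is the Cantor space. -/
theorem MeasurableSet.exists_preimage_prodMap_cantor {E Ω : Type*} [MeasurableSpace E]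
    [MeasurableSpace Ω] {B : Set (E × Ω)} (hB : MeasurableSet B) :
    ∃ g : Ω → ℕ → Bool, Measurable g ∧
      ∃ B' : Set (E × (ℕ → Bool)), MeasurableSet B' ∧ B = Prod.map id g ⁻¹' B' := by
  induction B, hB using MeasurableSpace.induction_on_inter generateFrom_prod.symm
    isPiSystem_prod with
  | empty => exact ⟨fun _ _ => false, measurable_const, ∅, MeasurableSet.empty, rfl⟩
  | basic B hB =>
    classical
    obtain ⟨s, hs, t, ht, rfl⟩ := hB
    refine ⟨fun ω _ => decide (ω ∈ t), measurable_pi_lambda _ fun _ =>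
      measurable_to_bool (by convert! ht; ext; simp), s ×ˢ ((fun z => z 0) ⁻¹' {true}), ?_, ?_⟩
    · exact MeasurableSet.prod hs (measurable_pi_apply 0 (measurableSet_singleton true))
    · ext ⟨x, ω⟩
      simp
  | compl B _ ih =>
    obtain ⟨g, hg, B', hB', rfl⟩ := ih
    exact ⟨g, hg, B'ᶜ, hB'.compl, rfl⟩
  | iUnion f _ _ ih =>
    choose g hg B' hB' hf using ih
    refine ⟨fun ω k => g k.unpair.1 ω k.unpair.2, measurable_pi_lambda _ fun k =>
      (measurable_pi_apply _).comp (hg _),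
      ⋃ n, Prod.map id (fun (z : ℕ → Bool) k => z (Nat.pair n k)) ⁻¹' B' n, ?_, ?_⟩
    · refine MeasurableSet.iUnion fun n => ?_
      refine (measurable_id.prodMap ?_) (hB' n)
      exact measurable_pi_lambda _ fun k => measurable_pi_apply _
    · simp_rw [hf, preimage_iUnion]
      congr! 2 with n
      ext ⟨x, ω⟩
      simp

/-- **Measurable projection theorem**: the projection along a standard Borel space of a measurable
set is measurable up to a null set. -/
theorem MeasurableSet.nullMeasurableSet_image_snd {E Ω : Type*} [MeasurableSpace E]
    [StandardBorelSpace E] [MeasurableSpace Ω] (P : Measure Ω) [IsFiniteMeasure P]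
    {B : Set (E × Ω)} (hB : MeasurableSet B) : NullMeasurableSet (Prod.snd '' B) P := by
  obtain ⟨g, hg, B', hB', rfl⟩ := hB.exists_preimage_prodMap_cantor
  have hnull : NullMeasurableSet (Prod.snd '' B') (P.map g) :=
    (hB'.analyticSet_image measurable_snd).nullMeasurableSet _
  have himage : Prod.snd '' (Prod.map id g ⁻¹' B') = g ⁻¹' (Prod.snd '' B') := by
    ext ω
    simp
  rw [himage]
  exact hnull.preimage (hg.quasiMeasurePreserving P)

/-- The supremum of a bounded jointly measurable family over a standard Borel index space is
a.e.-measurable. -/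
theorem aemeasurable_iSup_of_measurable_uncurry {E Ω : Type*} [MeasurableSpace E]
    [StandardBorelSpace E] [Nonempty E] [MeasurableSpace Ω] (P : Measure Ω) [IsFiniteMeasure P]
    {f : E → Ω → ℝ} (hf : Measurable (Function.uncurry f))
    (hbdd : ∀ ω, BddAbove (range fun x => f x ω)) :
    AEMeasurable (fun ω => ⨆ x, f x ω) P := by
  have hIoi : ∀ a, NullMeasurableSet ((fun ω => ⨆ x, f x ω) ⁻¹' Ioi a) P := by
    intro a
    convert! MeasurableSet.nullMeasurableSet_image_snd P (hf (measurableSet_Ioi (a := a))) using 1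
    ext ω
    simp [lt_ciSup_iff (hbdd ω)]
  have hgen : @Measurable (NullMeasurableSpace Ω P) ℝ _ _ fun ω => ⨆ x, f x ω :=
    measurable_of_Ioi hIoi
  exact NullMeasurable.aemeasurable hgen

/-- A process whose local supremum increments have second moment at most `C * r` has increments of
first moment at most `√(C * r)`. -/
theorem integral_abs_increment_le_sqrt {Ω : Type*} [MeasurableSpace Ω] (P : Measure Ω)
    [IsProbabilityMeasure P] {X : ℝ → Ω → ℝ} (hX : Measurable (fun p : ℝ × Ω => X p.1 p.2))
    {M : ℝ} (hM : ∀ t ω, |X t ω| ≤ M) {C t r : ℝ} (hr : 0 ≤ r)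
    (hmod : (∫ ω, (⨆ u : Icc (0 : ℝ) r, |X (t + (u : ℝ)) ω - X t ω|) ^ 2 ∂P) ≤ C * r) :
    ∫ ω, |X (t + r) ω - X t ω| ∂P ≤ √(C * r) := by
  have hXt : ∀ t, Measurable (X t) := fun t => hX.comp measurable_prodMk_left
  have hle : ∀ (u : ℝ) ω, |X (t + u) ω - X t ω| ≤ M + M := fun u ω =>
    (abs_sub _ _).trans (add_le_add (hM _ _) (hM _ _))
  have hbdd : ∀ ω, BddAbove (range fun u : Icc (0 : ℝ) r => |X (t + (u : ℝ)) ω - X t ω|) := by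
    rintro ω
    refine ⟨M + M, ?_⟩
    rintro _ ⟨u, rfl⟩
    exact hle u ω
  have : Nonempty (Icc (0 : ℝ) r) := ⟨⟨0, le_refl 0, hr⟩⟩
  have : StandardBorelSpace (Icc (0 : ℝ) r) := measurableSet_Icc.standardBorel
  let S : Ω → ℝ := fun ω => ⨆ u : Icc (0 : ℝ) r, |X (t + (u : ℝ)) ω - X t ω|
  have hSmeas : AEMeasurable S P := by
    refine aemeasurable_iSup_of_measurable_uncurry P
      (f := fun (u : Icc (0 : ℝ) r) ω => |X (t + (u : ℝ)) ω - X t ω|) ?_ hbdd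
    refine Measurable.abs (Measurable.sub ?_ ((hXt t).comp measurable_snd))
    exact hX.comp ((measurable_const.add (measurable_subtype_coe.comp measurable_fst)).prodMk
      measurable_snd)
  have hXS : ∀ ω, |X (t + r) ω - X t ω| ≤ S ω := fun ω =>
    le_ciSup (hbdd ω) (⟨r, hr, le_refl r⟩ : Icc (0 : ℝ) r)
  have hSM : ∀ ω, S ω ≤ M + M := fun ω => ciSup_le fun u => hle u ω
  have hS2 : Integrable (fun ω => S ω ^ 2) P := by
    refine Integrable.of_bound (hSmeas.pow_const 2).aestronglyMeasurable ((M + M) ^ 2) ?_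
    refine ae_of_all _ fun ω => ?_
    rw [Real.norm_of_nonneg (sq_nonneg _)]
    exact pow_le_pow_left₀ ((abs_nonneg _).trans (hXS ω)) (hSM ω) 2
  have hYmeas : Measurable fun ω => |X (t + r) ω - X t ω| := ((hXt _).sub (hXt _)).abs
  have hY : MemLp (fun ω => |X (t + r) ω - X t ω|) 2 P :=
    MemLp.of_bound hYmeas.aestronglyMeasurable (M + M) (ae_of_all _ fun ω => by
      simpa using hle r ω)
  refine Real.le_sqrt_of_sq_le ?_
  have hvar := ProbabilityTheory.variance_nonneg (fun ω => |X (t + r) ω - X t ω|) P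
  rw [ProbabilityTheory.variance_eq_sub hY] at hvar
  refine (sub_nonneg.1 hvar).trans (le_trans ?_ hmod)
  exact integral_mono hY.integrable_sq hS2 fun ω =>
    pow_le_pow_left₀ (abs_nonneg _) (hXS ω) 2

/-- Expected error of the left-endpoint rule on one interval. -/
theorem integral_abs_mul_sub_intervalIntegral_le {Ω : Type*} [MeasurableSpace Ω] (P : Measure Ω)
    [IsProbabilityMeasure P] {g : ℝ → Ω → ℝ} (hg : Measurable (fun p : ℝ × Ω => g p.1 p.2))
    {B : ℝ} (hB : ∀ t ω, |g t ω| ≤ B) {a c D : ℝ} (hac : a ≤ c)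
    (hD : ∀ t ∈ Icc a c, ∫ ω, |g a ω - g t ω| ∂P ≤ D) :
    ∫ ω, |(c - a) * g a ω - ∫ t in a..c, g t ω| ∂P ≤ (c - a) * D := by
  have hgω : ∀ ω, Measurable fun t => g t ω := fun ω => hg.comp measurable_prodMk_right
  have hga : Measurable (g a) := hg.comp measurable_prodMk_left
  have hint : ∀ ω, IntervalIntegrable (fun t => g t ω) volume a c := fun ω =>
    (intervalIntegrable_const (c := B)).mono_fun (hgω ω).aestronglyMeasurable
      (ae_of_all _ fun t => (hB t ω).trans (le_abs_self B))
  have hFmeas : Measurable fun p : Ω × ℝ => |g a p.1 - g p.2 p.1| :=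
    ((hga.comp measurable_fst).sub (hg.comp measurable_swap)).abs
  have hF : Integrable (fun p : Ω × ℝ => |g a p.1 - g p.2 p.1|)
      (P.prod (volume.restrict (Ioc a c))) := by
    refine Integrable.of_bound hFmeas.aestronglyMeasurable (B + B) (ae_of_all _ fun p => ?_)
    rw [Real.norm_eq_abs, abs_abs]
    exact (abs_sub _ _).trans (add_le_add (hB _ _) (hB _ _))
  have hpt : ∀ ω, |(c - a) * g a ω - ∫ t in a..c, g t ω| ≤ ∫ t in Ioc a c, |g a ω - g t ω| := by
    intro ω
    have hconst : (c - a) * g a ω = ∫ _ in a..c, g a ω := by simp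
    rw [hconst, ← intervalIntegral.integral_sub intervalIntegrable_const (hint ω),
      ← intervalIntegral.integral_of_le hac]
    exact intervalIntegral.abs_integral_le_integral_abs hac
  calc
    ∫ ω, |(c - a) * g a ω - ∫ t in a..c, g t ω| ∂P
      ≤ ∫ ω, (∫ t in Ioc a c, |g a ω - g t ω|) ∂P :=
        integral_mono_of_nonneg (ae_of_all _ fun ω => abs_nonneg _) hF.integral_prod_left
          (ae_of_all _ hpt)
    _ = ∫ t in Ioc a c, ∫ ω, |g a ω - g t ω| ∂P := integral_integral_swap hF
    _ ≤ ∫ _ in Ioc a c, D :=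
        setIntegral_mono_on hF.integral_prod_right (integrable_const D) measurableSet_Ioc
          fun t ht => hD t (Ioc_subset_Icc_self ht)
    _ = (c - a) * D := by simp [hac]

/-- Expected error of a left-endpoint Riemann sum with `N` terms for an integral over `n` steps. -/
theorem integral_abs_riemannSum_sub_le {Ω : Type*} [MeasurableSpace Ω] (P : Measure Ω)
    [IsProbabilityMeasure P] {g : ℝ → Ω → ℝ} (hg : Measurable (fun p : ℝ × Ω => g p.1 p.2))
    {B : ℝ} (hB : ∀ t ω, |g t ω| ≤ B) {Δ D : ℝ} (hΔ : 0 ≤ Δ) (N n : ℕ)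
    (hD : ∀ j : ℕ, ∀ r ∈ Icc 0 Δ, ∫ ω, |g (j * Δ) ω - g (j * Δ + r) ω| ∂P ≤ D) :
    ∫ ω, |Δ * ∑ j ∈ Finset.range N, g (j * Δ) ω - ∫ t in (0 : ℝ)..n * Δ, g t ω| ∂P
      ≤ n * Δ * D + Δ * (|(N : ℝ) - n| * B) := by
  have hgt : ∀ t, Measurable (g t) := fun t => hg.comp measurable_prodMk_left
  have hgω : ∀ ω, Measurable fun t => g t ω := fun ω => hg.comp measurable_prodMk_right
  have hint : ∀ ω a c, IntervalIntegrable (fun t => g t ω) volume a c := fun ω a c =>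
    (intervalIntegrable_const (c := B)).mono_fun (hgω ω).aestronglyMeasurable
      (ae_of_all _ fun t => (hB t ω).trans (le_abs_self B))
  have hsum : ∀ ω (N n : ℕ), n ≤ N →
      |∑ j ∈ Finset.range N, g (j * Δ) ω - ∑ j ∈ Finset.range n, g (j * Δ) ω|
        ≤ ((N : ℝ) - n) * B := by
    intro ω N n hnN
    rw [← Finset.sum_Ico_eq_sub _ hnN]
    refine (Finset.abs_sum_le_sum_abs _ _).trans
      ((Finset.sum_le_card_nsmul _ _ B fun j _ => hB _ _).trans_eq ?_)
    rw [Nat.card_Ico, nsmul_eq_mul, Nat.cast_sub hnN]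
  have hsum' : ∀ ω, |∑ j ∈ Finset.range N, g (j * Δ) ω - ∑ j ∈ Finset.range n, g (j * Δ) ω|
      ≤ |(N : ℝ) - n| * B := by
    intro ω
    rcases le_total n N with h | h
    · rw [abs_of_nonneg (sub_nonneg.2 (Nat.cast_le.2 h))]
      exact hsum ω N n h
    · rw [abs_sub_comm, abs_sub_comm (N : ℝ), abs_of_nonneg (sub_nonneg.2 (Nat.cast_le.2 h))]
      exact hsum ω n N h
  let err : ℕ → Ω → ℝ := fun j ω =>
    |Δ * g (j * Δ) ω - ∫ t in (j * Δ : ℝ)..((j + 1 : ℕ) * Δ : ℝ), g t ω|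
  have herr : ∀ j, Integrable (err j) P := by
    intro j
    have hm : StronglyMeasurable fun ω => ∫ t in (j * Δ : ℝ)..((j + 1 : ℕ) * Δ : ℝ), g t ω := by
      have h : (j * Δ : ℝ) ≤ (j + 1 : ℕ) * Δ := by push_cast; nlinarith
      simp_rw [intervalIntegral.integral_of_le h]
      exact StronglyMeasurable.integral_prod_right (f := fun (ω : Ω) (t : ℝ) => g t ω)
        (hg.comp measurable_swap).stronglyMeasurable
    refine Integrable.of_bound (((hgt _).const_mul Δ).sub hm.measurable).abs.aestronglyMeasurable
      (|Δ| * B + B * |((j + 1 : ℕ) * Δ : ℝ) - j * Δ|) (ae_of_all _ fun ω => ?_)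
    simp only [err]
    rw [Real.norm_eq_abs, abs_abs]
    refine (abs_sub _ _).trans (add_le_add ?_ ?_)
    · rw [abs_mul]
      exact mul_le_mul_of_nonneg_left (hB _ _) (abs_nonneg _)
    · exact intervalIntegral.norm_integral_le_of_norm_le_const
        (f := fun t => g t ω) fun t _ => hB t ω
  have herrD : ∀ j, ∫ ω, err j ω ∂P ≤ Δ * D := by
    intro j
    have hstep : ((j + 1 : ℕ) * Δ : ℝ) - j * Δ = Δ := by push_cast; ring
    have h := integral_abs_mul_sub_intervalIntegral_le P hg hB (a := j * Δ)
      (c := (j + 1 : ℕ) * Δ) (D := D) (by linarith) fun t ht => by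
        simpa using hD j (t - j * Δ) ⟨by linarith [ht.1], by linarith [ht.2]⟩
    rwa [hstep] at h
  have hpt : ∀ ω, |Δ * ∑ j ∈ Finset.range N, g (j * Δ) ω - ∫ t in (0 : ℝ)..n * Δ, g t ω|
      ≤ ∑ j ∈ Finset.range n, err j ω + Δ * (|(N : ℝ) - n| * B) := by
    intro ω
    have hsplit := intervalIntegral.sum_integral_adjacent_intervals (n := n)
      (f := fun t => g t ω) (μ := volume) (a := fun j : ℕ => (j * Δ : ℝ)) fun j _ => hint ω _ _
    simp only [Nat.cast_zero, zero_mul] at hsplit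
    rw [← hsplit]
    have hdecomp : Δ * ∑ j ∈ Finset.range N, g (j * Δ) ω
        - ∑ j ∈ Finset.range n, ∫ t in (j * Δ : ℝ)..((j + 1 : ℕ) * Δ : ℝ), g t ω
        = ∑ j ∈ Finset.range n,
            (Δ * g (j * Δ) ω - ∫ t in (j * Δ : ℝ)..((j + 1 : ℕ) * Δ : ℝ), g t ω)
          + Δ * (∑ j ∈ Finset.range N, g (j * Δ) ω - ∑ j ∈ Finset.range n, g (j * Δ) ω) := by
      rw [Finset.sum_sub_distrib, ← Finset.mul_sum]
      ring
    rw [hdecomp]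
    refine (abs_add_le _ _).trans (add_le_add (Finset.abs_sum_le_sum_abs _ _) ?_)
    rw [abs_mul, abs_of_nonneg hΔ]
    exact mul_le_mul_of_nonneg_left (hsum' ω) hΔ
  have hI : Integrable (fun ω => ∑ j ∈ Finset.range n, err j ω) P :=
    integrable_finsetSum _ fun j _ => herr j
  calc
    _ ≤ ∫ ω, (∑ j ∈ Finset.range n, err j ω + Δ * (|(N : ℝ) - n| * B)) ∂P :=
        integral_mono_of_nonneg (ae_of_all _ fun ω => abs_nonneg _) (hI.add (integrable_const _))
          (ae_of_all _ hpt)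
    _ = ∑ j ∈ Finset.range n, ∫ ω, err j ω ∂P + Δ * (|(N : ℝ) - n| * B) := by
        rw [integral_add hI (integrable_const _), integral_finsetSum _ fun j _ => herr j]
        simp
    _ ≤ n * Δ * D + Δ * (|(N : ℝ) - n| * B) := by
        have := Finset.sum_le_card_nsmul (Finset.range n) _ (Δ * D) fun j _ => herrD j
        rw [Finset.card_range, nsmul_eq_mul] at this
        linarith

/-- For a bounded process `σ²` with modulus-of-continuity moment bound
`E[sup_{r∈[0,s]} |σ²_{t+r} − σ²_t|²] ≤ C s`, a bounded Lipschitz kernel `K`, bandwidths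
`b_n = m_n Δ_n → 0` with `m_n √Δ_n → ∞` (`Δ_n = T/n`, `t_i = iΔ_n`), pre-averaging
window `k_n = ⌊1/(θ√Δ_n)⌋`, and `τ ∈ (0,T)`, the Riemann approximation error satisfies
`E|Δ_n Σ_{i=1}^{n−k_n+1} K_{b_n}(t_{i−1}−τ) σ²_{t_{i−1}} − ∫_0^T K_{b_n}(t−τ) σ²_t dt|
≤ C'/(m_n √Δ_n)` for some constant `C'`, i.e. the error is `O_P(1/(m_n √Δ_n))`. -/
theorem stmt_19 {Ω : Type*} [MeasurableSpace Ω] (P : Measure Ω) [IsProbabilityMeasure P]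
    (T : ℝ) (hT : 0 < T)
    (σ2 : ℝ → Ω → ℝ)
    (hσmeas : Measurable (fun p : ℝ × Ω => σ2 p.1 p.2))
    (hσbdd : ∃ M : ℝ, ∀ t ω, |σ2 t ω| ≤ M)
    (C : ℝ)
    (hσmod : ∀ t s : ℝ, 0 ≤ t → 0 ≤ s →
      (∫ ω, (⨆ r : Icc (0 : ℝ) s, |σ2 (t + (r : ℝ)) ω - σ2 t ω|) ^ 2 ∂P) ≤ C * s)
    (K : ℝ → ℝ) (hKbdd : ∃ M : ℝ, ∀ x, |K x| ≤ M)
    (hKlip : ∃ Lip : NNReal, LipschitzWith Lip K)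
    (θ : ℝ) (hθ : 0 < θ)
    (m : ℕ → ℕ) (hm1 : ∀ n, 1 ≤ m n)
    (hmΔ : Tendsto (fun n : ℕ => (m n : ℝ) * (T / (n : ℝ))) atTop (nhds 0))
    (hmsq : Tendsto (fun n : ℕ => (m n : ℝ) * Real.sqrt (T / (n : ℝ))) atTop atTop)
    (τ : ℝ) (hτ : τ ∈ Ioo 0 T) :
    ∃ C' : ℝ, ∀ n : ℕ, 1 ≤ n →
      (∫ ω,
          |(T / (n : ℝ)) * ∑ i ∈ Finset.Icc 1 (n - ⌊1 / (θ * Real.sqrt (T / (n : ℝ)))⌋₊ + 1),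
              (K (((((i : ℝ) - 1) * (T / (n : ℝ))) - τ) / ((m n : ℝ) * (T / (n : ℝ))))
                / ((m n : ℝ) * (T / (n : ℝ)))) * σ2 (((i : ℝ) - 1) * (T / (n : ℝ))) ω
            - ∫ t in (0 : ℝ)..T,
                (K ((t - τ) / ((m n : ℝ) * (T / (n : ℝ))))
                  / ((m n : ℝ) * (T / (n : ℝ)))) * σ2 t ω| ∂P)
        ≤ C' / ((m n : ℝ) * Real.sqrt (T / (n : ℝ))) := by
  obtain ⟨M, hM⟩ := hσbdd
  obtain ⟨A, hA⟩ := hKbdd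
  obtain ⟨Lip, hLip⟩ := hKlip
  obtain ⟨ω₀⟩ : Nonempty Ω := P.nonempty_of_neZero
  have hM0 : 0 ≤ M := (abs_nonneg _).trans (hM 0 ω₀)
  have hA0 : 0 ≤ A := (abs_nonneg _).trans (hA 0)
  obtain ⟨c, hc⟩ := hmsq.inv_tendsto_atTop.bddAbove_range
  refine ⟨T * (Lip * M * c + A * √C) + A * M * (1 / θ + √T), fun n hn => ?_⟩
  have hn1 : (1 : ℝ) ≤ n := by exact_mod_cast hn
  have hn0 : (n : ℝ) ≠ 0 := by positivity
  have hnΔ : n * (T / n) = T := mul_div_cancel₀ T hn0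
  have hΔ : 0 < T / (n : ℝ) := by positivity
  have hΔT : T / (n : ℝ) ≤ T := div_le_self hT.le hn1
  have hcn : ((m n : ℝ) * √(T / n))⁻¹ ≤ c := hc ⟨n, rfl⟩
  have hmn : (0 : ℝ) < m n := by exact_mod_cast hm1 n
  set k := ⌊1 / (θ * √(T / n))⌋₊ with hk
  set Δ : ℝ := T / n with hΔdef
  set b : ℝ := m n * Δ with hb
  have hb0 : 0 < b := mul_pos hmn hΔ
  have hs0 : 0 < √Δ := Real.sqrt_pos.2 hΔ
  have hss : √Δ * √Δ = Δ := Real.mul_self_sqrt hΔ.le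
  set q : ℝ := m n * √Δ with hq
  have hq0 : 0 < q := mul_pos hmn hs0
  have hbq : b = q * √Δ := by rw [hb, hq, mul_assoc, hss]
  have hKmeas : Measurable K := hLip.continuous.measurable
  let g : ℝ → Ω → ℝ := fun t ω => K ((t - τ) / b) / b * σ2 t ω
  have hgmeas : Measurable (fun p : ℝ × Ω => g p.1 p.2) :=
    ((hKmeas.comp ((measurable_fst.sub_const τ).div_const b)).div_const b).mul hσmeas
  have hKb : ∀ x, |K x / b| ≤ A / b := fun x => by
    rw [abs_div, abs_of_pos hb0]
    exact div_le_div_of_nonneg_right (hA x) hb0.le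
  have hgB : ∀ t ω, |g t ω| ≤ A / b * M := fun t ω => by
    rw [abs_mul]
    exact mul_le_mul (hKb _) (hM t ω) (abs_nonneg _) (by positivity)
  have hσt : ∀ t, Measurable (σ2 t) := fun t => hσmeas.comp measurable_prodMk_left
  have hD : ∀ j : ℕ, ∀ r ∈ Icc 0 Δ, ∫ ω, |g (j * Δ) ω - g (j * Δ + r) ω| ∂P
      ≤ Lip * Δ / b / b * M + A / b * √(C * Δ) := by
    intro j r hr
    have hC0 : 0 ≤ C := by
      have h := hσmod 0 1 le_rfl zero_le_one
      rw [mul_one] at h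
      exact (integral_nonneg fun ω => sq_nonneg _).trans h
    have ht : (0 : ℝ) ≤ j * Δ := by positivity
    have hinc := integral_abs_increment_le_sqrt P hσmeas hM hr.1 (hσmod _ r ht hr.1)
    have hinc' : ∫ ω, |σ2 (j * Δ + r) ω - σ2 (j * Δ) ω| ∂P ≤ √(C * Δ) :=
      hinc.trans (Real.sqrt_le_sqrt (mul_le_mul_of_nonneg_left hr.2 hC0))
    have hI : Integrable (fun ω => |σ2 (j * Δ + r) ω - σ2 (j * Δ) ω|) P :=
      Integrable.of_bound ((hσt _).sub (hσt _)).abs.aestronglyMeasurable (M + M)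
        (ae_of_all _ fun ω => by
          rw [Real.norm_eq_abs, abs_abs]
          exact (abs_sub _ _).trans (add_le_add (hM _ _) (hM _ _)))
    have hKdiff : |K ((j * Δ - τ) / b) / b - K ((j * Δ + r - τ) / b) / b| ≤ Lip * Δ / b / b := by
      rw [← sub_div, abs_div, abs_of_pos hb0]
      refine div_le_div_of_nonneg_right ?_ hb0.le
      have h := hLip.dist_le_mul ((j * Δ - τ) / b) ((j * Δ + r - τ) / b)
      rw [Real.dist_eq, Real.dist_eq, ← sub_div, abs_div, abs_of_pos hb0, abs_sub_comm (_ - _),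
        show j * Δ + r - τ - (j * Δ - τ) = r by ring, abs_of_nonneg hr.1] at h
      refine h.trans ?_
      rw [mul_div_assoc]
      gcongr
      exact hr.2
    have hpt : ∀ ω, |g (j * Δ) ω - g (j * Δ + r) ω|
        ≤ Lip * Δ / b / b * M + A / b * |σ2 (j * Δ + r) ω - σ2 (j * Δ) ω| := by
      intro ω
      have hsplit : g (j * Δ) ω - g (j * Δ + r) ω
          = (K ((j * Δ - τ) / b) / b - K ((j * Δ + r - τ) / b) / b) * σ2 (j * Δ) ω
            - K ((j * Δ + r - τ) / b) / b * (σ2 (j * Δ + r) ω - σ2 (j * Δ) ω) := by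
        simp only [g]
        ring
      rw [hsplit]
      refine (abs_sub _ _).trans (add_le_add ?_ ?_) <;> rw [abs_mul]
      · exact mul_le_mul hKdiff (hM _ _) (abs_nonneg _) (by positivity)
      · exact mul_le_mul_of_nonneg_right (hKb _) (abs_nonneg _)
    refine (integral_mono_of_nonneg (ae_of_all _ fun ω => abs_nonneg _)
      ((integrable_const _).add (hI.const_mul _)) (ae_of_all _ hpt)).trans ?_
    simp only [Pi.add_apply]
    rw [integral_add (integrable_const _) (hI.const_mul _), integral_const, probReal_univ,
      one_smul, integral_const_mul]
    gcongr
  have hmain := integral_abs_riemannSum_sub_le P hgmeas hgB hΔ.le (n - k + 1) n hD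
  have hreindex : ∀ ω, ∑ i ∈ Finset.Icc 1 (n - k + 1),
      K ((((i : ℝ) - 1) * Δ - τ) / b) / b * σ2 (((i : ℝ) - 1) * Δ) ω
      = ∑ j ∈ Finset.range (n - k + 1), g (j * Δ) ω := by
    intro ω
    rw [← Finset.Ico_add_one_right_eq_Icc, Finset.sum_Ico_eq_sum_range, Nat.add_sub_cancel]
    refine Finset.sum_congr rfl fun j _ => ?_
    simp [g]
  simp_rw [hreindex]
  rw [hnΔ] at hmain
  refine hmain.trans ?_
  have hkq : (k : ℝ) ≤ 1 / (θ * √Δ) := Nat.floor_le (by positivity)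
  have hcount : |((n - k + 1 : ℕ) : ℝ) - n| ≤ k + 1 := by
    rcases le_total k n with h | h
    · push_cast [Nat.cast_sub h]
      rw [abs_le]
      have : (0 : ℝ) ≤ k := k.cast_nonneg
      constructor <;> linarith
    · have : (n : ℝ) ≤ k := by exact_mod_cast h
      rw [Nat.sub_eq_zero_of_le h, abs_le]
      push_cast
      constructor <;> linarith
  have hsT : √Δ ≤ √T := Real.sqrt_le_sqrt hΔT
  have hedge : Δ * (|((n - k + 1 : ℕ) : ℝ) - n| * (A / b * M)) ≤ A * M * (1 / θ + √T) / q := by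
    have h1 : √Δ * (k + 1) ≤ 1 / θ + √T := by
      have : √Δ * k ≤ √Δ * (1 / (θ * √Δ)) := mul_le_mul_of_nonneg_left hkq hs0.le
      have h2 : √Δ * (1 / (θ * √Δ)) = 1 / θ := by field_simp
      linarith
    calc
      _ ≤ Δ * ((k + 1) * (A / b * M)) := by gcongr
      _ = A * M * (√Δ * (k + 1)) / q := by
        rw [hbq]
        field_simp
        rw [Real.sq_sqrt hΔ.le]
        ring
      _ ≤ _ := by gcongr
  have hosc : T * (Lip * Δ / b / b * M + A / b * √(C * Δ)) ≤ T * (Lip * M * c + A * √C) / q := by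
    have h1 : Lip * Δ / b / b * M = Lip * M * q⁻¹ / q := by
      rw [hbq]
      field_simp
      rw [Real.sq_sqrt hΔ.le]
    have h2 : A / b * √(C * Δ) = A * √C / q := by
      rw [Real.sqrt_mul' _ hΔ.le, hbq]
      field_simp
    rw [h1, h2, ← add_div, ← mul_div_assoc]
    gcongr
  rw [add_div]
  exact add_le_add hosc hedge
end
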